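/- arXiv:2502.05047 — 3 statements merged into one kernel-verified Lean document; each statement's English description precedes it below -/
import Mathlib

section
/- Let n be a natural number and let M : Perm (Fin n) → ℂ. There exists a function w from the partitions of Fin n to ℂ such that for every permutation σ, M σ = ∑_{Λ : P(σ) ≤ Λ} w Λ (sum over all partitions Λ coarser than or equal to the cycle partition of σ), if and only if M is orbit invariant, i.e. M σ = M τ whenever P(σ) = P(τ). -/
open Finset Equiv

instance {n : ℕ} (σ : Equiv.Perm (Fin n)) :
    DecidableRel (Equiv.Perm.SameCycle.setoid σ).r :=
  fun x y => inferInstanceAs (Decidable (σ.SameCycle x y))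

/-- The cycle partition of a permutation of `Fin n`: the finpartition of `Fin n`
whose blocks are the orbits of `σ` (equivalence classes of `SameCycle σ`). -/
def Equiv.Perm.cyclePartition {n : ℕ} (σ : Equiv.Perm (Fin n)) :
    Finpartition (Finset.univ : Finset (Fin n)) :=
  Finpartition.ofSetoid (Equiv.Perm.SameCycle.setoid σ)

instance {n : ℕ} :
    DecidableRel (α := Finpartition (Finset.univ : Finset (Fin n))) (· ≤ ·) :=
  fun P Q => decidable_of_iff (∀ b ∈ P.parts, ∃ c ∈ Q.parts, b ⊆ c) Iff.rfl

/-- The finset of partitions coarser than or equal to (i.e. refined by) `P`. -/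
def coarsenings {n : ℕ} (P : Finpartition (Finset.univ : Finset (Fin n))) :
    Finset (Finpartition (Finset.univ : Finset (Fin n))) :=
  Finset.univ.filter fun Λ => P ≤ Λ

theorem exists_weight_aux {α : Type*} [Fintype α] [PartialOrder α]
    [DecidableRel (α := α) (· ≤ ·)] (F : α → ℂ) :
    ∃ w : α → ℂ, ∀ P, F P = ∑ Λ ∈ Finset.univ.filter (fun Λ => P ≤ Λ), w Λ := by
  classical
  have wf : WellFounded (fun a b : α => b < a) := wellFounded_gt
  let w : α → ℂ := wf.fix fun P ih =>
    F P - ∑ Λ : α, if h : P < Λ then ih Λ h else 0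
  have hw : ∀ P, w P = F P - ∑ Λ : α, if P < Λ then w Λ else 0 := by
    intro P
    have := wf.fix_eq (C := fun _ => ℂ)
      (fun P ih => F P - ∑ Λ : α, if h : P < Λ then ih Λ h else 0) P
    simpa [w] using this
  refine ⟨w, fun P => ?_⟩
  have hs : Finset.univ.filter (fun Λ => P ≤ Λ)
      = insert P (Finset.univ.filter (fun Λ => P < Λ)) := by
    ext Λ
    simp [le_iff_eq_or_lt, eq_comm]
  rw [hs, Finset.sum_insert (by simp), Finset.sum_filter, hw P]
  ring

/-- A function `M` on permutations admits a partition representation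
`M σ = ∑_{Λ : P(σ) ≤ Λ} w Λ` if and only if `M` is orbit invariant. -/
theorem partition_representation_iff_orbit_invariant (n : ℕ)
    (M : Equiv.Perm (Fin n) → ℂ) :
    (∃ w : Finpartition (Finset.univ : Finset (Fin n)) → ℂ,
        ∀ σ : Equiv.Perm (Fin n), M σ = ∑ Λ ∈ coarsenings σ.cyclePartition, w Λ) ↔
      (∀ σ τ : Equiv.Perm (Fin n), σ.cyclePartition = τ.cyclePartition → M σ = M τ) := by
  classical
  constructor
  · rintro ⟨w, hw⟩ σ τ h
    rw [hw σ, hw τ, h]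
  · intro h
    obtain ⟨w, hw⟩ := exists_weight_aux
      (fun P : Finpartition (Finset.univ : Finset (Fin n)) =>
        if hP : ∃ σ : Equiv.Perm (Fin n), σ.cyclePartition = P then M hP.choose else 0)
    refine ⟨w, fun σ => ?_⟩
    have hP : ∃ τ : Equiv.Perm (Fin n), τ.cyclePartition = σ.cyclePartition := ⟨σ, rfl⟩
    have h1 := hw σ.cyclePartition
    rw [dif_pos hP] at h1
    rw [h σ _ hP.choose_spec.symm, h1]
    rfl
end

section
/- Let n be a natural number and Λ a partition of Fin n with at least two blocks. Then the product over the blocks b of Λ of (card b)! is at most (n-1)!. Consequently, (∏_{b ∈ blocks(Λ)} (card b)!) / n! ≤ 1/n (as rational numbers, assuming n ≥ 1). -/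
theorem aux_fact (i j : ℕ) :
    Nat.factorial (i+1) * Nat.factorial (j+1) ≤ Nat.factorial (i+j+1) := by
  induction j with
  | zero => simp
  | succ j ih =>
    rw [Nat.factorial_succ (j+1), show i + (j+1) + 1 = (i+j+1)+1 by ring,
      Nat.factorial_succ (i+j+1)]
    calc _ = (j+1+1) * (Nat.factorial (i+1) * Nat.factorial (j+1)) := by ring
      _ ≤ _ := Nat.mul_le_mul (by omega) ih

/-- For a partition `Λ` of `Fin n` with at least two blocks, the product of the
factorials of the block sizes is at most `(n-1)!`; consequently, dividing by `n!`
gives a rational number at most `1/n` (assuming `n ≥ 1`). -/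
theorem partition_factorial_prod_le (n : ℕ)
    (Λ : Finpartition (Finset.univ : Finset (Fin n)))
    (h : 2 ≤ Λ.parts.card) :
    (∏ b ∈ Λ.parts, Nat.factorial b.card) ≤ Nat.factorial (n - 1) ∧
    (1 ≤ n →
      ((∏ b ∈ Λ.parts, Nat.factorial b.card : ℕ) : ℚ) / (Nat.factorial n : ℚ)
        ≤ 1 / (n : ℚ)) := by
  have key : (∏ b ∈ Λ.parts, Nat.factorial b.card) ≤ Nat.factorial (n - 1) := by
    obtain ⟨b, hb, c, hc, hbc⟩ := Finset.one_lt_card.mp h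
    have hs := Λ.sum_card_parts
    rw [Finset.card_univ, Fintype.card_fin, ← Finset.add_sum_erase _ _ hb] at hs
    have hb1 : 0 < b.card := Finset.card_pos.mpr (Λ.nonempty_of_mem_parts hb)
    have hc1 : 0 < c.card := Finset.card_pos.mpr (Λ.nonempty_of_mem_parts hc)
    have hc2 : c.card ≤ ∑ x ∈ Λ.parts.erase b, x.card :=
      Finset.single_le_sum (f := fun x : Finset (Fin n) => x.card) (fun _ _ => Nat.zero_le _)
        (Finset.mem_erase.mpr ⟨hbc.symm, hc⟩)
    have hd := Nat.le_of_dvd (Nat.factorial_pos _)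
      (Nat.prod_factorial_dvd_factorial_sum (Λ.parts.erase b) (fun x => x.card))
    rw [← Finset.mul_prod_erase _ _ hb]
    refine (Nat.mul_le_mul_left _ hd).trans ?_
    obtain ⟨i, hi⟩ := Nat.exists_eq_add_of_le' hb1
    obtain ⟨j, hj⟩ := Nat.exists_eq_add_of_le' (hc1.trans_le hc2)
    rw [hi, hj] at hs ⊢
    rw [show n - 1 = i + j + 1 by omega]
    exact aux_fact i j
  refine ⟨key, fun hn => ?_⟩
  have hn' : (0:ℚ) < n := by exact_mod_cast hn
  have hf : (0:ℚ) < Nat.factorial n := by exact_mod_cast Nat.factorial_pos n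
  rw [div_le_div_iff₀ hf hn', one_mul]
  have := Nat.mul_le_mul_right n key
  rw [mul_comm (Nat.factorial (n-1)), Nat.mul_factorial_pred (by omega)] at this
  exact_mod_cast this
end

section
/- Let n be a natural number and M : Perm (Fin n) → ℂ an arbitrary function. Define the twirled function M' by M' σ = (1/n!) · ∑_{τ ∈ Perm (Fin n)} M (τ σ τ⁻¹). Then M' admits a partition representation: there exists a function w from the partitions of Fin n to ℂ such that for every σ, M' σ = ∑_{Λ : P(σ) ≤ Λ} w Λ. In particular, M' is orbit invariant: M' σ = M' τ whenever P(σ) = P(τ). -/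
open Finset Equiv

theorem aux_image {n : ℕ} (σ : Equiv.Perm (Fin n)) :
    σ.cycleFactorsFinset.image Equiv.Perm.support =
      σ.support.image (fun x => univ.filter (fun y => σ.SameCycle x y)) := by
  have key : ∀ x ∈ σ.support, (σ.cycleOf x).support = univ.filter (fun y => σ.SameCycle x y) := by
    intro x hx
    ext y
    rw [Equiv.Perm.mem_support_cycleOf_iff]
    simp [Equiv.Perm.mem_support.1 hx]
  ext s
  simp only [Finset.mem_image]
  constructor
  · rintro ⟨c, hc, rfl⟩
    obtain ⟨x, hx⟩ := (Equiv.Perm.mem_cycleFactorsFinset_iff.1 hc).1.nonempty_support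
    have h1 := Equiv.Perm.cycle_is_cycleOf hx hc
    have h2 : x ∈ σ.support := Equiv.Perm.mem_cycleFactorsFinset_support_le hc hx
    exact ⟨x, h2, by rw [← key x h2, ← h1]⟩
  · rintro ⟨x, hx, rfl⟩
    exact ⟨σ.cycleOf x, Equiv.Perm.cycleOf_mem_cycleFactorsFinset_iff.2 hx, key x hx⟩

theorem aux_cycleType {n : ℕ} (σ : Equiv.Perm (Fin n)) :
    σ.cycleType = (σ.cycleFactorsFinset.image Equiv.Perm.support).1.map Finset.card := by
  rw [Finset.image_val_of_injOn, Multiset.map_map]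
  · rfl
  · intro c hc d hd h
    obtain ⟨x, hx⟩ := (Equiv.Perm.mem_cycleFactorsFinset_iff.1 hc).1.nonempty_support
    have hx' : x ∈ d.support := by rw [← h]; exact hx
    rw [Equiv.Perm.cycle_is_cycleOf hx hc, Equiv.Perm.cycle_is_cycleOf hx' hd]

theorem aux_support {n : ℕ} (σ : Equiv.Perm (Fin n)) (x : Fin n) :
    x ∈ σ.support ↔ ∃ y, y ≠ x ∧ σ.SameCycle x y := by
  rw [Equiv.Perm.mem_support]
  constructor
  · intro h
    exact ⟨σ x, h, ⟨1, by simp⟩⟩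
  · rintro ⟨y, hy, k, hk⟩ h
    exact hy (by rw [← hk]; exact Equiv.Perm.zpow_apply_eq_self_of_apply_eq_self h k)

theorem aux_conj {n : ℕ} (σ τ : Equiv.Perm (Fin n))
    (h : σ.cyclePartition = τ.cyclePartition) : IsConj σ τ := by
  have hs : ∀ x y, σ.SameCycle x y ↔ τ.SameCycle x y := by
    intro x y
    have h1 : y ∈ σ.cyclePartition.part x ↔ σ.SameCycle x y :=
      Finpartition.mem_part_ofSetoid_iff_rel (s := Equiv.Perm.SameCycle.setoid σ)
    have h2 : y ∈ τ.cyclePartition.part x ↔ τ.SameCycle x y :=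
      Finpartition.mem_part_ofSetoid_iff_rel (s := Equiv.Perm.SameCycle.setoid τ)
    rw [← h1, ← h2, h]
  rw [Equiv.Perm.isConj_iff_cycleType_eq, aux_cycleType, aux_cycleType, aux_image, aux_image]
  have hsup : σ.support = τ.support := by
    ext x
    rw [aux_support, aux_support]
    simp only [hs]
  rw [hsup]
  simp only [hs]

theorem aux_moebius {α : Type*} [Fintype α] [PartialOrder α] (g : α → ℂ) :
    ∃ w : α → ℂ, ∀ P, g P = ∑ Λ ∈ (by classical exact univ.filter (fun Λ => P ≤ Λ)), w Λ := by
  classical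
  let w : α → ℂ := (Finite.wellFounded_of_trans_of_irrefl (fun a b : α => b < a)).fix
    (fun P ih => g P - ∑ Λ : {Λ // P < Λ}, ih Λ.1 Λ.2)
  have hw : ∀ P, w P = g P - ∑ Λ : {Λ // P < Λ}, w Λ.1 := fun P =>
    WellFounded.fix_eq _ _ P
  refine ⟨w, fun P => ?_⟩
  have : (univ.filter (fun Λ => P ≤ Λ)) = insert P (univ.filter (fun Λ => P < Λ)) := by
    ext x
    simp [le_iff_eq_or_lt, eq_comm]
  rw [this, Finset.sum_insert (by simp), hw P,
    Finset.sum_subtype (univ.filter (fun Λ => P < Λ)) (p := fun Λ => P < Λ) (by simp)]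
  ring

/-- The twirled function `M' σ = (1/n!) ∑_τ M (τ σ τ⁻¹)` admits a partition
representation; in particular it is orbit invariant. -/
theorem twirled_has_partition_representation (n : ℕ)
    (M M' : Equiv.Perm (Fin n) → ℂ)
    (hM' : ∀ σ : Equiv.Perm (Fin n),
      M' σ = (1 / (Nat.factorial n : ℂ)) *
        ∑ τ : Equiv.Perm (Fin n), M (τ * σ * τ⁻¹)) :
    (∃ w : Finpartition (Finset.univ : Finset (Fin n)) → ℂ,
        ∀ σ : Equiv.Perm (Fin n), M' σ = ∑ Λ ∈ coarsenings σ.cyclePartition, w Λ) ∧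
      (∀ σ τ : Equiv.Perm (Fin n),
        σ.cyclePartition = τ.cyclePartition → M' σ = M' τ) := by
  have horb : ∀ σ τ : Equiv.Perm (Fin n),
      σ.cyclePartition = τ.cyclePartition → M' σ = M' τ := by
    intro σ τ h
    obtain ⟨c, rfl⟩ := isConj_iff.1 (aux_conj σ τ h)
    rw [hM', hM']
    congr 1
    refine (Fintype.sum_equiv (Equiv.mulRight c) _ _ fun t => ?_).symm
    simp [mul_assoc]
  refine ⟨?_, horb⟩
  classical
  let g : Finpartition (Finset.univ : Finset (Fin n)) → ℂ := fun P =>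
    if h : ∃ σ : Equiv.Perm (Fin n), σ.cyclePartition = P then M' h.choose else 0
  obtain ⟨w, hw⟩ := aux_moebius g
  refine ⟨w, fun σ => ?_⟩
  have hex : ∃ τ : Equiv.Perm (Fin n), τ.cyclePartition = σ.cyclePartition := ⟨σ, rfl⟩
  have hg : g σ.cyclePartition = M' σ := by
    simp only [g, dif_pos hex]
    exact horb _ _ hex.choose_spec
  rw [← hg, hw]
  refine Finset.sum_congr ?_ fun _ _ => rfl
  ext Λ
  simp [coarsenings]
end
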